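/- Fix n ∈ ℕ, let ε = 2^{−4n} and P_k = (k+1) + ε(k+1)² for 0 ≤ k ≤ 2^n − 1. For 0 ≤ l ≤ n and 0 ≤ i ≤ 2^{n−l} − 1, let N^l_i = {P_k : i·2^l ≤ k ≤ (i+1)·2^l − 1}, and define the average-linkage distance d(X,Y) = (1/(|X||Y|)) ∑_{x∈X, y∈Y} |x − y|. Then whenever 0 ≤ l' < l ≤ n − 1, 0 ≤ i ≤ 2^{n−l} − 2, and 0 ≤ j ≤ 2^{n−l'} − 2: d(N^l_i, N^l_{i+1}) > d(N^{l'}_j, N^{l'}_{j+1}). (Adjacent distances at a higher level are larger than adjacent distances at any lower level.) -/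

import Mathlib

/-- `ε = 2^(-4n)`. -/
noncomputable def eps (n : ℕ) : ℝ := ((2 : ℝ) ^ (4 * n))⁻¹

/-- The point `P_k = (k+1) + ε (k+1)^2`. -/
noncomputable def pt (n k : ℕ) : ℝ := ((k : ℝ) + 1) + eps n * ((k : ℝ) + 1) ^ 2

/-- The node `N^l_i = {P_k : i·2^l ≤ k ≤ (i+1)·2^l − 1}` of the complete binary tree. -/
noncomputable def node (n l i : ℕ) : Finset ℝ :=
  (Finset.Icc (i * 2 ^ l) ((i + 1) * 2 ^ l - 1)).image (pt n)

/-- The average-linkage distance between finite sets of reals. -/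
noncomputable def avgDist (X Y : Finset ℝ) : ℝ :=
  (∑ x ∈ X, ∑ y ∈ Y, |x - y|) / ((X.card : ℝ) * (Y.card : ℝ))

/-!
The nodes `N^l_i` and `N^l_{i+1}` are consecutive blocks of `m = 2^l` points, so every difference
`y - x` is positive and the absolute values can be dropped. The linear parts `k + 1` of the points
then contribute exactly `m` to the average linkage distance. The quadratic parts contribute between
`0` and `ε (2^n)^2 = 4^(-n)`, which is at most `1/2` because `n ≥ 1`. Hence the distance lies in
`[2^l, 2^l + 1/2]` (`avgDist_node_mem_Icc`), and these intervals increase strictly with the level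
`l`, as `2^l' + 1 ≤ 2^l` for `l' < l`.
-/

lemma eps_pos (n : ℕ) : 0 < eps n := by
  unfold eps; positivity

lemma eps_mul_sq_le_half {n : ℕ} (hn : 1 ≤ n) : eps n * ((2 : ℝ) ^ n) ^ 2 ≤ 1 / 2 := by
  have h1 : (2 : ℝ) ≤ 2 ^ n := by
    calc (2 : ℝ) = 2 ^ 1 := by norm_num
      _ ≤ 2 ^ n := pow_le_pow_right₀ (by norm_num) hn
  have h4 : (2 : ℝ) ^ (4 * n) = ((2 : ℝ) ^ n) ^ 2 * ((2 : ℝ) ^ n) ^ 2 := by ring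
  have h2 : (2 : ℝ) ≤ ((2 : ℝ) ^ n) ^ 2 := by nlinarith
  unfold eps
  rw [h4, inv_mul_le_iff₀ (by positivity)]
  nlinarith

lemma pt_strictMono (n : ℕ) : StrictMono (pt n) := by
  intro a b hab
  have h : (a : ℝ) < b := by exact_mod_cast hab
  have ha : (0 : ℝ) ≤ a := by positivity
  have h2 : eps n * ((a : ℝ) + 1) ^ 2 ≤ eps n * ((b : ℝ) + 1) ^ 2 := by
    have := (eps_pos n).le
    gcongr
  unfold pt
  linarith

lemma pt_sub_mem_Icc {n a b : ℕ} (hn : 1 ≤ n) (hab : a ≤ b) (hb : b < 2 ^ n) :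
    pt n b - pt n a ∈ Set.Icc ((b : ℝ) - a) ((b : ℝ) - a + 1 / 2) := by
  have h : (a : ℝ) ≤ b := by exact_mod_cast hab
  have hb' : (b : ℝ) + 1 ≤ 2 ^ n := by exact_mod_cast hb
  have he := (eps_pos n).le
  have h2 : eps n * ((a : ℝ) + 1) ^ 2 ≤ eps n * ((b : ℝ) + 1) ^ 2 := by gcongr
  have h3 : eps n * ((b : ℝ) + 1) ^ 2 ≤ eps n * ((2 : ℝ) ^ n) ^ 2 := by gcongr
  have h4 : 0 ≤ eps n * ((a : ℝ) + 1) ^ 2 := by positivity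
  have h5 := eps_mul_sq_le_half hn
  unfold pt
  constructor <;> linarith

lemma node_eq_image_range (n l i : ℕ) :
    node n l i = (Finset.range (2 ^ l)).image (fun a => pt n (i * 2 ^ l + a)) := by
  have hm : 0 < 2 ^ l := by positivity
  have h : Finset.Icc (i * 2 ^ l) ((i + 1) * 2 ^ l - 1)
      = (Finset.range (2 ^ l)).image (fun a => i * 2 ^ l + a) := by
    ext k
    simp only [Finset.mem_Icc, Finset.mem_image, Finset.mem_range, add_mul, one_mul]
    constructor
    · rintro ⟨h1, h2⟩
      exact ⟨k - i * 2 ^ l, by omega, by omega⟩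
    · rintro ⟨a, ha, rfl⟩
      omega
  rw [node, h, Finset.image_image]
  rfl

lemma pt_add_injective (n c : ℕ) : Function.Injective (fun a => pt n (c + a)) :=
  (pt_strictMono n).injective.comp (add_right_injective c)

lemma avgDist_node (n l i : ℕ) :
    avgDist (node n l i) (node n l (i + 1)) =
      (∑ a ∈ Finset.range (2 ^ l), ∑ b ∈ Finset.range (2 ^ l),
        (pt n ((i + 1) * 2 ^ l + b) - pt n (i * 2 ^ l + a))) / ((2 : ℝ) ^ l * 2 ^ l) := by
  unfold avgDist
  rw [node_eq_image_range, node_eq_image_range,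
    Finset.card_image_of_injective _ (pt_add_injective n _),
    Finset.card_image_of_injective _ (pt_add_injective n _),
    Finset.sum_image (pt_add_injective n _).injOn, Finset.card_range]
  push_cast
  congr 1
  refine Finset.sum_congr rfl fun a ha => ?_
  rw [Finset.sum_image (pt_add_injective n _).injOn]
  refine Finset.sum_congr rfl fun b _ => ?_
  rw [Finset.mem_range] at ha
  have h : pt n (i * 2 ^ l + a) < pt n ((i + 1) * 2 ^ l + b) :=
    pt_strictMono n (by rw [add_mul, one_mul]; omega)
  rw [abs_of_neg (by linarith)]
  ring

/-- The linear parts contribute exactly `2^l` on average, since the offsets `b - a` inside the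
blocks cancel. -/
lemma sum_sum_add_sub (m : ℕ) (c : ℝ) :
    ∑ a ∈ Finset.range m, ∑ b ∈ Finset.range m, (c + ((b : ℝ) - a)) = c * (m * m) := by
  simp only [Finset.sum_add_distrib, Finset.sum_sub_distrib, Finset.sum_const, Finset.card_range,
    nsmul_eq_mul, ← Finset.mul_sum]
  ring

/-- The blocks `N^l_i` and `N^l_{i+1}` both lie among the `2^n` points by `h`. -/
lemma avgDist_node_mem_Icc {n l i : ℕ} (hn : 1 ≤ n) (h : (i + 2) * 2 ^ l ≤ 2 ^ n) :
    avgDist (node n l i) (node n l (i + 1)) ∈ Set.Icc ((2 : ℝ) ^ l) (2 ^ l + 1 / 2) := by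
  have key : ∀ a ∈ Finset.range (2 ^ l), ∀ b ∈ Finset.range (2 ^ l),
      pt n ((i + 1) * 2 ^ l + b) - pt n (i * 2 ^ l + a) ∈
        Set.Icc ((2 : ℝ) ^ l + ((b : ℝ) - a)) ((2 ^ l + 1 / 2) + ((b : ℝ) - a)) := by
    intro a ha b hb
    rw [Finset.mem_range] at ha hb
    have e1 : (i + 1) * 2 ^ l = i * 2 ^ l + 2 ^ l := by ring
    have e2 : (i + 2) * 2 ^ l = i * 2 ^ l + 2 * 2 ^ l := by ring
    obtain ⟨h1, h2⟩ := pt_sub_mem_Icc (n := n) (a := i * 2 ^ l + a) (b := (i + 1) * 2 ^ l + b) hn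
      (by omega) (by omega)
    push_cast at h1 h2
    constructor <;> linarith
  have hlo := sum_sum_add_sub (2 ^ l) ((2 : ℝ) ^ l)
  have hhi := sum_sum_add_sub (2 ^ l) ((2 : ℝ) ^ l + 1 / 2)
  push_cast at hlo hhi
  rw [avgDist_node, Set.mem_Icc, le_div_iff₀ (by positivity), div_le_iff₀ (by positivity),
    ← hlo, ← hhi]
  exact ⟨Finset.sum_le_sum fun a ha => Finset.sum_le_sum fun b hb => (key a ha b hb).1,
    Finset.sum_le_sum fun a ha => Finset.sum_le_sum fun b hb => (key a ha b hb).2⟩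

theorem avgDist_adjacent_higher_level_gt (n l l' i j : ℕ)
    (hl' : l' < l) (hl : l + 1 ≤ n)
    (hi : i + 2 ≤ 2 ^ (n - l)) (hj : j + 2 ≤ 2 ^ (n - l')) :
    avgDist (node n l' j) (node n l' (j + 1)) <
      avgDist (node n l i) (node n l (i + 1)) := by
  have block : ∀ {k p : ℕ}, k ≤ n → p + 2 ≤ 2 ^ (n - k) → (p + 2) * 2 ^ k ≤ 2 ^ n := by
    intro k p hk hp
    calc (p + 2) * 2 ^ k ≤ 2 ^ (n - k) * 2 ^ k := Nat.mul_le_mul_right _ hp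
      _ = 2 ^ n := by rw [← pow_add, Nat.sub_add_cancel hk]
  have hlow := (avgDist_node_mem_Icc (by omega) (block (by omega) hj)).2
  have hhigh := (avgDist_node_mem_Icc (by omega) (block (by omega) hi)).1
  have hpow : (2 : ℝ) ^ l' + 1 ≤ 2 ^ l := by
    exact_mod_cast Nat.pow_lt_pow_right (by norm_num : 1 < 2) hl'
  linarith
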